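/- Let G be a finite simple graph in which every vertex has even degree, and suppose the graph polynomial F_G has a nonzero almost central coefficient (there is ξ with [x^ξ]F_G ≠ 0 and |ξ_i − deg_G(v_i)/2| ≤ 1 for all i). Then for every integer k ≥ 2 the Alon–Tarsi number of H = G □ C_{2k} satisfies AT(H) ≤ Δ(G)/2 + 2, where Δ(G) is the maximum degree of G (note Δ(H) = Δ(G) + 2, so this says AT(H) ≤ Δ(H)/2 + 1). -/

import Mathlib

/-!
The central coefficient of the graph polynomial of `H = G □ C_{2k}`, the one at the exponent
`deg_H / 2 = deg_G / 2 + 1`, is shown to be nonzero by the transfer matrix method.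

Orient the cycle edges from layer `i` to layer `i + 1` and expand the factors belonging to them;
a choice is a family of sets `S i ⊆ V`, the vertices whose cycle edge leaving layer `i` contributes
its head. For a fixed family the variables of different layers separate, and the layer between
`S i = A` and `S (i + 1) = B` contributes `± [x ^ (deg / 2 + 1_B - 1_A)] F_G`. Hence the central
coefficient is `tr (N ^ (2k))` for the matrix `N`, indexed by subsets of `V`, with these entries.

The symmetry `ξ ↦ deg - ξ` of `F_G` gives `Nᵀ = (-1) ^ |E| • N`, so `tr (N ^ (2k))` is up to sign
the sum of the squares of the entries of `N ^ k`, which is nonzero as soon as `N ≠ 0`. The nonzero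
entries of `N` are, up to sign, exactly the nonzero almost central coefficients of `F_G`.
-/

open MvPolynomial Finset

/-- An orientation of a simple graph: a finite set of ordered pairs containing,
for each edge `{u, v}` of `G`, exactly one of `(u, v)` and `(v, u)`. -/
structure GraphOrientation {V : Type*} (G : SimpleGraph V) where
  edges : Finset (V × V)
  adj_of_mem : ∀ e ∈ edges, G.Adj e.1 e.2
  mem_iff_not_swap_mem : ∀ u v : V, G.Adj u v → ((u, v) ∈ edges ↔ (v, u) ∉ edges)

/-- The graph polynomial `∏_{(i,j) ∈ E} (x_j - x_i)` associated to an orientation. -/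
noncomputable def graphPoly {V : Type*} {G : SimpleGraph V} (D : GraphOrientation G) :
    MvPolynomial V ℝ :=
  ∏ e ∈ D.edges, (X e.2 - X e.1)

/-- The outdegree of a vertex in an orientation. -/
def GraphOrientation.outDeg {V : Type*} [DecidableEq V] {G : SimpleGraph V}
    (D : GraphOrientation G) (v : V) : ℕ :=
  (D.edges.filter fun e => e.1 = v).card

/-- `G` is `f`-choosable: any assignment of lists of real colors with `|A_v| ≥ f v`
admits a proper coloring from the lists. -/
def Choosable {V : Type*} (G : SimpleGraph V) (f : V → ℕ) : Prop :=
  ∀ A : V → Finset ℝ, (∀ v, f v ≤ (A v).card) →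
    ∃ c : V → ℝ, (∀ v, c v ∈ A v) ∧ ∀ u v : V, G.Adj u v → c u ≠ c v

/-- The list chromatic number. -/
noncomputable def chNumber {V : Type*} (G : SimpleGraph V) : ℕ :=
  sInf {m | Choosable G fun _ => m}

/-- The Alon–Tarsi number: the least `k` such that the graph polynomial has a
monomial `x^d` with nonzero coefficient and `max_v d_v = k - 1`. -/
noncomputable def ATNumber {V : Type*} (G : SimpleGraph V) : ℕ :=
  sInf {k | ∃ (D : GraphOrientation G) (d : V →₀ ℕ),
    MvPolynomial.coeff d (graphPoly D) ≠ 0 ∧ d.support.sup d + 1 = k}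

instance {α β : Type*} {G : SimpleGraph α} {H : SimpleGraph β}
    [DecidableEq α] [DecidableEq β] [DecidableRel G.Adj] [DecidableRel H.Adj] :
    DecidableRel (G.boxProd H).Adj :=
  fun _ _ => decidable_of_iff _ SimpleGraph.boxProd_adj.symm

/-! ### Traces of powers of matrices -/

section Matrix

open Matrix

variable {ι R : Type*} [Fintype ι] [DecidableEq ι]

/-- The weight `g` on the endpoints of a walk is what makes the induction on `n` go through. -/
lemma sum_mul_prod_walk_eq [CommSemiring R] (N : Matrix ι ι R) (n : ℕ) (g : ι → ι → R) :
    ∑ S : Fin (n + 1) → ι, g (S 0) (S (Fin.last n)) * ∏ i : Fin n, N (S i.castSucc) (S i.succ) =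
      ∑ a, ∑ b, g a b * (N ^ n) a b := by
  induction n generalizing g with
  | zero =>
    rw [← (Equiv.funUnique (Fin 1) ι).symm.sum_comp]
    simp [one_apply]
  | succ n ih =>
    rw [← (Fin.consEquiv fun _ => ι).sum_comp, Fintype.sum_prod_type]
    refine sum_congr rfl fun a _ => ?_
    calc
      _ = ∑ S : Fin (n + 1) → ι, N a (S 0) * g a (S (Fin.last n)) *
            ∏ i : Fin n, N (S i.castSucc) (S i.succ) := by
        refine sum_congr rfl fun S _ => ?_
        simp only [Fin.consEquiv_apply, Fin.cons_zero, ← Fin.succ_last, Fin.cons_succ,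
          Fin.prod_univ_succ, Fin.castSucc_zero, Fin.castSucc_succ]
        ring
      _ = ∑ b, ∑ c, N a b * g a c * (N ^ n) b c := ih fun b c => N a b * g a c
      _ = ∑ c, g a c * (N ^ (n + 1)) a c := by
        rw [sum_comm]
        refine sum_congr rfl fun c _ => ?_
        rw [pow_succ', mul_apply, mul_sum]
        exact sum_congr rfl fun b _ => by ring

lemma trace_pow_succ_eq_sum_prod [CommSemiring R] (N : Matrix ι ι R) (n : ℕ) :
    (N ^ (n + 1)).trace = ∑ S : Fin (n + 1) → ι, ∏ i, N (S i) (S (i + 1)) := by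
  calc
    (N ^ (n + 1)).trace = ∑ a, ∑ b, N b a * (N ^ n) a b := by
      simp only [trace, Matrix.diag, pow_succ', mul_apply]
      exact sum_comm
    _ = ∑ S : Fin (n + 1) → ι, N (S (Fin.last n)) (S 0) *
          ∏ i : Fin n, N (S i.castSucc) (S i.succ) :=
      (sum_mul_prod_walk_eq N n fun a b => N b a).symm
    _ = ∑ S : Fin (n + 1) → ι, ∏ i, N (S i) (S (i + 1)) := by
      refine sum_congr rfl fun S _ => ?_
      rw [Fin.prod_univ_castSucc, mul_comm]
      simp

variable [CommRing R] [StarRing R] {N : Matrix ι ι R} {σ : R}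

lemma pow_mul_conjTranspose_pow_of_conjTranspose_eq_smul (hN : Nᴴ = σ • N) (m : ℕ) :
    N ^ m * (N ^ m)ᴴ = σ ^ m • N ^ (2 * m) := by
  rw [conjTranspose_pow, hN, smul_pow, mul_smul_comm, ← pow_add, two_mul]

variable [PartialOrder R] [StarOrderedRing R] [NoZeroDivisors R]

lemma pow_ne_zero_of_conjTranspose_eq_smul (hN : Nᴴ = σ • N) (h0 : N ≠ 0) (k : ℕ) :
    N ^ k ≠ 0 := by
  have halve (m : ℕ) (hm : N ^ (2 * m) = 0) : N ^ m = 0 := by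
    rw [← self_mul_conjTranspose_eq_zero,
      pow_mul_conjTranspose_pow_of_conjTranspose_eq_smul hN, hm, smul_zero]
  have pow_two_pow_ne_zero (j : ℕ) : N ^ 2 ^ j ≠ 0 := by
    induction j with
    | zero => simpa using h0
    | succ j ih => exact fun h => ih (halve _ (by rwa [← pow_succ']))
  exact fun h => pow_two_pow_ne_zero k (pow_eq_zero_of_le Nat.lt_two_pow_self.le h)

lemma trace_pow_two_mul_ne_zero_of_conjTranspose_eq_smul (hN : Nᴴ = σ • N) (h0 : N ≠ 0)
    (k : ℕ) : (N ^ (2 * k)).trace ≠ 0 := by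
  intro h
  apply pow_ne_zero_of_conjTranspose_eq_smul hN h0 k
  rw [← trace_mul_conjTranspose_self_eq_zero_iff,
    pow_mul_conjTranspose_pow_of_conjTranspose_eq_smul hN, trace_smul, h, smul_zero]

end Matrix

/-! ### Products of polynomials in disjoint blocks of variables -/

section Blocks

variable {V I R : Type*}

lemma sum_mapDomain_prodMk_apply [Fintype I] (m : I → V →₀ ℕ) (v : V) (j : I) :
    (∑ i, (m i).mapDomain (·, i)) (v, j) = m j v := by
  rw [Finsupp.finsetSum_apply, sum_eq_single j]
  · exact Finsupp.mapDomain_apply (Prod.mk_left_injective j) _ _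
  · intro i _ hij
    refine Finsupp.mapDomain_of_notMem_range _ _ ?_
    rintro ⟨w, hw⟩
    exact hij (congrArg Prod.snd hw)
  · simp

lemma coeff_prod_rename_prodMk [Fintype I] [CommSemiring R]
    (p : I → MvPolynomial V R) {d : V × I →₀ ℕ} {c : I → V →₀ ℕ} (hd : ∀ v i, d (v, i) = c i v) :
    coeff d (∏ i, rename (·, i) (p i)) = ∏ i, coeff (c i) (p i) := by
  classical
  have rename_eq (i : I) : rename (·, i) (p i) =
      ∑ m ∈ (p i).support, monomial (m.mapDomain (·, i)) (coeff m (p i)) := by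
    conv_lhs => rw [(p i).as_sum]
    simp only [map_sum, rename_monomial]
  have exponent_eq_iff (m : I → V →₀ ℕ) : ∑ i, (m i).mapDomain (·, i) = d ↔ m = c := by
    simp only [Finsupp.ext_iff, Prod.forall, sum_mapDomain_prodMk_apply, hd, funext_iff]
    exact forall_comm
  simp_rw [rename_eq, prod_univ_sum, coeff_sum, ← monomial_sum_prod, coeff_monomial,
    exponent_eq_iff, sum_ite_eq']
  refine ite_eq_left_iff.2 fun h => ?_
  obtain ⟨i, hi⟩ : ∃ i, coeff (c i) (p i) = 0 := by simpa [Fintype.mem_piFinset] using h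
  exact (prod_eq_zero (mem_univ i) hi).symm

end Blocks

/-! ### Coefficients of the graph polynomial -/

namespace GraphOrientation

variable {V : Type*} [DecidableEq V] {G : SimpleGraph V} (D : GraphOrientation G)

/-- The indegree of a vertex in an orientation, the companion of `GraphOrientation.outDeg`. -/
def inDeg (v : V) : ℕ :=
  #{e ∈ D.edges | e.2 = v}

lemma outDeg_eq_card_filter (v : V) [Fintype (G.neighborSet v)] :
    D.outDeg v = #{w ∈ G.neighborFinset v | (v, w) ∈ D.edges} := by
  refine .trans (congrArg card ?_) (card_map ⟨Prod.mk v, Prod.mk_right_injective v⟩)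
  ext ⟨a, b⟩
  have := D.adj_of_mem (a, b)
  aesop

lemma inDeg_eq_card_filter (v : V) [Fintype (G.neighborSet v)] :
    D.inDeg v = #{w ∈ G.neighborFinset v | (v, w) ∉ D.edges} := by
  refine .trans (congrArg card ?_) (card_map ⟨(·, v), Prod.mk_left_injective v⟩)
  ext ⟨a, b⟩
  have := D.adj_of_mem (a, b)
  have := D.mem_iff_not_swap_mem a b
  have := G.adj_comm a b
  aesop

lemma outDeg_add_inDeg (v : V) [Fintype (G.neighborSet v)] :
    D.outDeg v + D.inDeg v = G.degree v := by
  rw [outDeg_eq_card_filter, inDeg_eq_card_filter, card_filter_add_card_filter_not,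
    SimpleGraph.card_neighborFinset_eq_degree]

/-- The exponent of the monomial that arises in the expansion of the graph polynomial when the edges
in `t` contribute the variable of their tail and all other edges that of their head. -/
noncomputable def choiceExponent (t : Finset (V × V)) : V →₀ ℕ :=
  ∑ e ∈ t, Finsupp.single e.1 1 + ∑ e ∈ D.edges \ t, Finsupp.single e.2 1

variable {D} in
lemma choiceExponent_add_choiceExponent_sdiff {t : Finset (V × V)} (ht : t ⊆ D.edges) (v : V)
    [Fintype (G.neighborSet v)] :
    D.choiceExponent t v + D.choiceExponent (D.edges \ t) v = G.degree v := by
  have tails := sum_sdiff ht (f := fun e => (Finsupp.single e.1 1 : V →₀ ℕ) v)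
  have heads := sum_sdiff ht (f := fun e => (Finsupp.single e.2 1 : V →₀ ℕ) v)
  have tails_eq : ∑ e ∈ D.edges, (Finsupp.single e.1 1 : V →₀ ℕ) v = D.outDeg v := by
    simp [outDeg, Finsupp.single_apply]
  have heads_eq : ∑ e ∈ D.edges, (Finsupp.single e.2 1 : V →₀ ℕ) v = D.inDeg v := by
    simp [inDeg, Finsupp.single_apply]
  simp only [choiceExponent, Finset.sdiff_sdiff_eq_self ht, Finsupp.add_apply,
    Finsupp.finsetSum_apply]
  have := D.outDeg_add_inDeg v
  omega

end GraphOrientation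

section GraphPoly

variable {V : Type*} {G : SimpleGraph V} (D : GraphOrientation G)

lemma isHomogeneous_graphPoly : (graphPoly D).IsHomogeneous #D.edges := by
  rw [card_eq_sum_ones]
  exact IsHomogeneous.prod _ _ _ fun e _ => (isHomogeneous_X _ _).sub (isHomogeneous_X _ _)

lemma graphPoly_eq_sum_monomial [DecidableEq V] :
    graphPoly D = ∑ t ∈ D.edges.powerset, monomial (D.choiceExponent t) ((-1) ^ #t) := by
  rw [graphPoly, prod_sub]
  refine sum_congr rfl fun t _ => ?_
  have monomial_eq : monomial (D.choiceExponent t) (1 : ℝ) =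
      (∏ e ∈ t, X e.1) * ∏ e ∈ D.edges \ t, X e.2 := by
    simp only [X, ← monomial_sum_one, monomial_mul, GraphOrientation.choiceExponent, mul_one]
  rw [← mul_one ((-1 : ℝ) ^ #t), ← C_mul_monomial, monomial_eq]
  simp only [map_pow, map_neg, map_one]
  ring

variable {D} in
/-- Exchanging the choice of endpoint at every edge turns an exponent `ξ` into `deg - ξ`. The
monomials `a` and `b` avoid truncated subtraction of exponents. -/
lemma coeff_graphPoly_mul_monomial_comm [G.LocallyFinite] {a b c : V →₀ ℕ}
    (h : ∀ v, G.degree v + a v + b v = 2 * c v) :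
    coeff c (graphPoly D * monomial b 1) =
      (-1) ^ #D.edges * coeff c (graphPoly D * monomial a 1) := by
  classical
  simp only [graphPoly_eq_sum_monomial, sum_mul, monomial_mul, mul_one, coeff_sum, coeff_monomial,
    mul_sum]
  refine sum_nbij' (D.edges \ ·) (D.edges \ ·) (by simp) (by simp) (by simp) (by simp)
    fun t ht => ?_
  rw [mem_powerset] at ht
  have exponent_iff : D.choiceExponent t + b = c ↔ D.choiceExponent (D.edges \ t) + a = c := by
    simp only [Finsupp.ext_iff, Finsupp.add_apply]
    refine forall_congr' fun v => ?_
    have := GraphOrientation.choiceExponent_add_choiceExponent_sdiff ht v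
    have := h v
    omega
  have sign_eq : (-1 : ℝ) ^ #t = (-1) ^ #D.edges * (-1) ^ #(D.edges \ t) := by
    rw [← card_sdiff_add_card_eq_card ht, pow_add, mul_right_comm, ← mul_pow]
    simp
  simp only [exponent_iff, sign_eq, mul_ite, mul_zero]

lemma ATNumber_le {d : V →₀ ℕ} (hd : coeff d (graphPoly D) ≠ 0) {m : ℕ} (hm : ∀ v, d v ≤ m) :
    ATNumber G ≤ m + 1 :=
  calc
    ATNumber G ≤ d.support.sup d + 1 := Nat.sInf_le ⟨D, d, hd, rfl⟩
    _ ≤ m + 1 := Nat.succ_le_succ (Finset.sup_le fun v _ => hm v)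

end GraphPoly

/-! ### The transfer matrix -/

section TransferMatrix

variable {V R : Type*} [Fintype V] [DecidableEq V]

/-- The exponent `1_A + 1_{Bᶜ}` of the monomial contributed to one layer `V × {i}` by the cycle
edges at it, if `A` is the set of vertices whose incoming cycle edge contributes its head and `B`
the set of vertices whose outgoing cycle edge does. -/
noncomputable def layerExponent (A B : Finset V) : V →₀ ℕ :=
  ∑ v ∈ A, Finsupp.single v 1 + ∑ v ∈ Bᶜ, Finsupp.single v 1

lemma layerExponent_apply (A B : Finset V) (v : V) :
    layerExponent A B v = (if v ∈ A then 1 else 0) + (if v ∈ B then 0 else 1) := by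
  simp only [layerExponent, Finsupp.add_apply, Finsupp.finsetSum_apply, Finsupp.single_apply,
    sum_ite_eq', mem_compl, ite_not]

lemma degree_layerExponent (A B : Finset V) : (layerExponent A B).degree = #A + #Bᶜ := by
  simp [layerExponent]

lemma exists_add_layerExponent_eq {ξ c : V →₀ ℕ} (h : ∀ v, ξ v ≤ c v ∧ c v ≤ ξ v + 2) :
    ∃ A B, ξ + layerExponent A B = c := by
  refine ⟨({v | ξ v + 2 ≤ c v} : Finset V), ({v | c v ≤ ξ v} : Finset V), ?_⟩
  ext v
  have := h v
  simp only [Finsupp.add_apply, layerExponent_apply, mem_filter_univ]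
  split_ifs <;> omega

variable [CommRing R]

/-- The factor belonging to one layer in the expansion of the polynomial of a product with a cycle,
for the sets `A`, `B` of `layerExponent`; `p` is the polynomial of the layer itself. -/
noncomputable def layerPoly (p : MvPolynomial V R) (A B : Finset V) : MvPolynomial V R :=
  p * (∏ v ∈ A, X v) * ∏ v ∈ Bᶜ, -X v

lemma layerPoly_eq_smul (p : MvPolynomial V R) (A B : Finset V) :
    layerPoly p A B = (-1 : R) ^ #Bᶜ • (p * monomial (layerExponent A B) 1) := by
  have : monomial (layerExponent A B) (1 : R) = (∏ v ∈ A, X v) * ∏ v ∈ Bᶜ, X v := by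
    simp only [X, ← monomial_sum_one, monomial_mul, layerExponent, mul_one]
  rw [layerPoly, this, prod_neg, smul_eq_C_mul]
  simp only [map_pow, map_neg, map_one]
  ring

/-- The transfer matrix of a polynomial `p`, recording the coefficients of `x ^ c` in the factors
`layerPoly p A B`. -/
noncomputable def transferMatrix (p : MvPolynomial V R) (c : V →₀ ℕ) :
    Matrix (Finset V) (Finset V) R :=
  Matrix.of fun A B => coeff c (layerPoly p A B)

lemma transferMatrix_apply (p : MvPolynomial V R) (c : V →₀ ℕ) (A B : Finset V) :
    transferMatrix p c A B = (-1) ^ #Bᶜ * coeff c (p * monomial (layerExponent A B) 1) := by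
  rw [transferMatrix, Matrix.of_apply, layerPoly_eq_smul, coeff_smul, smul_eq_mul]

lemma transferMatrix_ne_zero {p : MvPolynomial V R} {ξ c : V →₀ ℕ} (hne : coeff ξ p ≠ 0)
    (h : ∀ v, ξ v ≤ c v ∧ c v ≤ ξ v + 2) : transferMatrix p c ≠ 0 := by
  obtain ⟨A, B, rfl⟩ := exists_add_layerExponent_eq h
  intro h0
  have entry_eq : (-1) ^ #Bᶜ * coeff ξ p = 0 := by
    simpa only [transferMatrix_apply, coeff_mul_monomial, mul_one, Matrix.zero_apply]
      using congrFun₂ h0 A B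
  exact hne ((isUnit_neg_one.pow _).mul_right_eq_zero.1 entry_eq)

lemma degree_eq_of_coeff_mul_monomial_layerExponent_ne_zero {p : MvPolynomial V R} {m : ℕ}
    (hp : p.IsHomogeneous m) {c : V →₀ ℕ} {A B : Finset V}
    (h : coeff c (p * monomial (layerExponent A B) 1) ≠ 0) : c.degree = m + (#A + #Bᶜ) := by
  contrapose! h
  exact (hp.mul (isHomogeneous_monomial 1 (degree_layerExponent A B))).coeff_eq_zero h

/-- The signs `(-1) ^ |Bᶜ|` of the entries do not interfere: if the entries at `(A, B)` and `(B, A)`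
are nonzero, homogeneity gives `|A| = |B|`. -/
lemma transpose_transferMatrix_graphPoly {G : SimpleGraph V} [G.LocallyFinite]
    (D : GraphOrientation G) {c : V →₀ ℕ} (hc : ∀ v, 2 * c v = G.degree v + 2) :
    (transferMatrix (graphPoly D) c).transpose =
      (-1 : ℝ) ^ #D.edges • transferMatrix (graphPoly D) c := by
  ext A B
  have hcomm : coeff c (graphPoly D * monomial (layerExponent B A) 1) =
      (-1) ^ #D.edges * coeff c (graphPoly D * monomial (layerExponent A B) 1) := by
    refine coeff_graphPoly_mul_monomial_comm fun v => ?_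
    rw [hc, layerExponent_apply, layerExponent_apply]
    split_ifs <;> omega
  rw [Matrix.transpose_apply, Matrix.smul_apply, transferMatrix_apply, transferMatrix_apply, hcomm,
    smul_eq_mul]
  rcases eq_or_ne (coeff c (graphPoly D * monomial (layerExponent A B) 1)) 0 with h0 | h0
  · simp [h0]
  · have hAB := degree_eq_of_coeff_mul_monomial_layerExponent_ne_zero (isHomogeneous_graphPoly D) h0
    have hBA := degree_eq_of_coeff_mul_monomial_layerExponent_ne_zero (isHomogeneous_graphPoly D)
      (A := B) (B := A) (by rw [hcomm]; simpa using h0)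
    have card_compl_eq : #Aᶜ = #Bᶜ := by
      have := card_add_card_compl A
      have := card_add_card_compl B
      omega
    rw [card_compl_eq, mul_left_comm]

lemma prod_rename_mul_prod_X_sub_X_eq_sum (p : MvPolynomial V R) (n : ℕ) :
    (∏ i : Fin (n + 1), rename (·, i) p) * ∏ i, ∏ v, (X (v, i + 1) - X (v, i)) =
      ∑ S : Fin (n + 1) → Finset V, ∏ i, rename (·, i) (layerPoly p (S (i - 1)) (S i)) := by
  simp only [sub_eq_add_neg (X _), Fintype.prod_add]
  rw [Fintype.prod_sum, mul_sum]
  refine sum_congr rfl fun S _ => ?_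
  have heads_eq : ∏ i, ∏ v ∈ S (i - 1), (X (v, i) : MvPolynomial (V × Fin (n + 1)) R) =
      ∏ i, ∏ v ∈ S i, X (v, i + 1) := by
    rw [← Equiv.prod_comp (Equiv.addRight (1 : Fin (n + 1)))]
    simp
  simp only [layerPoly, map_mul, map_prod, map_neg, rename_X, prod_mul_distrib, heads_eq, mul_assoc]

lemma coeff_prod_rename_mul_prod_X_sub_X (p : MvPolynomial V R) (n : ℕ) {c : V →₀ ℕ}
    {d : V × Fin (n + 1) →₀ ℕ} (hd : ∀ v i, d (v, i) = c v) :
    coeff d ((∏ i, rename (·, i) p) * ∏ i, ∏ v, (X (v, i + 1) - X (v, i))) =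
      (transferMatrix p c ^ (n + 1)).trace := by
  rw [prod_rename_mul_prod_X_sub_X_eq_sum, coeff_sum, trace_pow_succ_eq_sum_prod]
  refine sum_congr rfl fun S _ => ?_
  rw [coeff_prod_rename_prodMk _ (c := fun _ => c) hd,
    ← Equiv.prod_comp (Equiv.addRight (1 : Fin (n + 1)))]
  simp [transferMatrix]

end TransferMatrix

/-! ### Orientations of products with a cycle -/

namespace GraphOrientation

variable {V W : Type*} [Fintype V] [Fintype W] [DecidableEq V] [DecidableEq W]
  {G : SimpleGraph V} {H : SimpleGraph W}

/-- The orientation of `G □ H` that restricts to `D` on every copy of `G` and to `E` on every copy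
of `H`. The edges `((u, v), (w, w))` and `((v, v), (w, w'))` of the factors have their middle
components swapped to become pairs of vertices of the product. -/
def boxProd (D : GraphOrientation G) (E : GraphOrientation H) : GraphOrientation (G.boxProd H) where
  edges := (D.edges ×ˢ univ.diag).map (Equiv.prodProdProdComm V V W W).toEmbedding ∪
    (univ.diag ×ˢ E.edges).map (Equiv.prodProdProdComm V V W W).toEmbedding
  adj_of_mem := by
    rintro ⟨⟨u, i⟩, ⟨v, j⟩⟩ h
    simp only [mem_union, mem_map_equiv, mem_product, Equiv.prodProdProdComm_symm,
      Equiv.prodProdProdComm_apply, mem_diag, mem_univ, true_and] at h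
    exact h.imp (.imp_left (D.adj_of_mem _)) fun h => ⟨E.adj_of_mem _ h.2, h.1⟩
  mem_iff_not_swap_mem := by
    rintro ⟨u, i⟩ ⟨v, j⟩ h
    simp only [mem_union, mem_map_equiv, mem_product, Equiv.prodProdProdComm_symm,
      Equiv.prodProdProdComm_apply, mem_diag, mem_univ, true_and]
    rcases h with ⟨hadj, rfl⟩ | ⟨hadj, rfl⟩
    · simp [hadj.ne, hadj.ne', D.mem_iff_not_swap_mem u v hadj]
    · simp [hadj.ne, hadj.ne', E.mem_iff_not_swap_mem i j hadj]

lemma graphPoly_boxProd (D : GraphOrientation G) (E : GraphOrientation H) :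
    graphPoly (D.boxProd E) =
      (∏ w, rename (·, w) (graphPoly D)) * ∏ v, rename (v, ·) (graphPoly E) := by
  rw [graphPoly, boxProd, prod_union]
  · rw [prod_map, prod_map, prod_product_right, prod_product]
    simp [graphPoly, prod_diag]
  · rw [disjoint_map, disjoint_product]
    left
    rw [disjoint_left]
    rintro ⟨u, v⟩ h h'
    exact (D.adj_of_mem _ h).ne (mem_diag.1 h').2

end GraphOrientation

/-- The cyclic orientation `i → i + 1` of a cycle; the length `n + 3` makes the cycle simple. -/
def cycleOrientation (n : ℕ) : GraphOrientation (SimpleGraph.cycleGraph (n + 3)) where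
  edges := univ.image fun i => (i, i + 1)
  adj_of_mem := by
    rintro ⟨i, j⟩ h
    obtain rfl : i + 1 = j := by simpa using h
    simp [SimpleGraph.cycleGraph_adj]
  mem_iff_not_swap_mem i j h := by
    have add_two_ne (i : Fin (n + 3)) : i + 1 + 1 ≠ i := by
      rw [add_assoc, Ne, add_eq_left, Fin.ext_iff]
      simp [Fin.val_add, Nat.mod_eq_of_lt]
    have : j = i + 1 ∨ i = j + 1 := by
      simpa [SimpleGraph.cycleGraph_adj, sub_eq_iff_eq_add', or_comm, add_comm] using h
    rcases this with rfl | rfl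
    · simp [add_two_ne]
    · simp [add_two_ne]

lemma graphPoly_cycleOrientation (n : ℕ) :
    graphPoly (cycleOrientation n) = ∏ i, (X (i + 1) - X i) := by
  rw [graphPoly, cycleOrientation, prod_image fun i _ j _ h => congrArg Prod.fst h]

section AlmostCentral

variable {V : Type*} [Fintype V] [DecidableEq V] {G : SimpleGraph V} (D : GraphOrientation G)

lemma coeff_graphPoly_boxProd_cycleOrientation (n : ℕ) {c : V →₀ ℕ} {d : V × Fin (n + 3) →₀ ℕ}
    (hd : ∀ v i, d (v, i) = c v) :
    coeff d (graphPoly (D.boxProd (cycleOrientation n))) =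
      (transferMatrix (graphPoly D) c ^ (n + 3)).trace := by
  rw [← coeff_prod_rename_mul_prod_X_sub_X _ _ hd, GraphOrientation.graphPoly_boxProd,
    graphPoly_cycleOrientation, prod_comm]
  simp only [map_prod, map_sub, rename_X]

variable {D} in
lemma trace_transferMatrix_graphPoly_pow_ne_zero [G.LocallyFinite] {c ξ : V →₀ ℕ}
    (hc : ∀ v, 2 * c v = G.degree v + 2) (hne : coeff ξ (graphPoly D) ≠ 0)
    (hac : ∀ v, |2 * (ξ v : ℤ) - (G.degree v : ℤ)| ≤ 2) (k : ℕ) :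
    (transferMatrix (graphPoly D) c ^ (2 * k)).trace ≠ 0 := by
  refine trace_pow_two_mul_ne_zero_of_conjTranspose_eq_smul (σ := (-1) ^ #D.edges) ?_ ?_ k
  · rw [Matrix.conjTranspose_eq_transpose_of_trivial, transpose_transferMatrix_graphPoly D hc]
  · refine transferMatrix_ne_zero hne fun v => ?_
    have := hc v
    have := abs_le.1 (hac v)
    omega

end AlmostCentral

/-- If all degrees of `G` are even and the graph polynomial of `G`
(w.r.t. some fixed orientation) has a nonzero almost central coefficient, then for
every `k ≥ 2` the Alon–Tarsi number of `H = G □ C_{2k}` satisfies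
`AT(H) ≤ Δ(G)/2 + 2`. -/
theorem stmt1 {V : Type*} [Fintype V] [DecidableEq V] (G : SimpleGraph V)
    [DecidableRel G.Adj]
    (hEven : ∀ v, Even (G.degree v))
    (D : GraphOrientation G) (ξ : V →₀ ℕ)
    (hne : MvPolynomial.coeff ξ (graphPoly D) ≠ 0)
    (hac : ∀ v, |2 * (ξ v : ℤ) - (G.degree v : ℤ)| ≤ 2)
    (k : ℕ) (hk : 2 ≤ k) :
    ATNumber (G.boxProd (SimpleGraph.cycleGraph (2 * k))) ≤ G.maxDegree / 2 + 2 := by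
  obtain ⟨n, hn⟩ : ∃ n, 2 * k = n + 3 := ⟨2 * k - 3, by omega⟩
  let c : V →₀ ℕ := Finsupp.equivFunOnFinite.symm fun v => G.degree v / 2 + 1
  let d : V × Fin (n + 3) →₀ ℕ := Finsupp.equivFunOnFinite.symm fun p => c p.1
  have hc (v : V) : 2 * c v = G.degree v + 2 := by
    rw [Finsupp.equivFunOnFinite_symm_apply_apply, mul_add, Nat.two_mul_div_two_of_even (hEven v)]
  have hd : coeff d (graphPoly (D.boxProd (cycleOrientation n))) ≠ 0 := by
    rw [coeff_graphPoly_boxProd_cycleOrientation D n (c := c) fun _ _ => rfl, ← hn]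
    exact trace_transferMatrix_graphPoly_pow_ne_zero hc hne hac k
  rw [hn]
  refine ATNumber_le _ hd fun p => ?_
  exact Nat.add_le_add_right (Nat.div_le_div_right (G.degree_le_maxDegree p.1)) 1
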